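/- Let G be a group and A ⊆ G a nonempty finite set. The following are equivalent: (i) VC^ℓ_A(A) = 0; (ii) VC^r_A(A) = 0; (iii) |AA| = |A|; (iv) A is a coset aH of a subgroup H ≤ G satisfying aH = Ha. -/

import Mathlib

open scoped Pointwise symmDiff

/-- `Stab^ℓ_N(A) = {x : |xA △ A| ≤ N}`. -/
def stabL {G : Type*} [Group G] (A : Set G) (N : ℝ) : Set G :=
  {x : G | (((x • A) ∆ A).ncard : ℝ) ≤ N}

/-- `Stab^r_N(A) = {x : |Ax △ A| ≤ N}`. -/
def stabR {G : Type*} [Group G] (A : Set G) (N : ℝ) : Set G :=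
  {x : G | (((A * {x}) ∆ A).ncard : ℝ) ≤ N}

/-- `St^ℓ_ε(A) = Stab^ℓ_{ε|A|}(A)`. -/
def stL {G : Type*} [Group G] (A : Set G) (ε : ℝ) : Set G := stabL A (ε * A.ncard)

/-- `St^r_ε(A) = Stab^r_{ε|A|}(A)`. -/
def stR {G : Type*} [Group G] (A : Set G) (ε : ℝ) : Set G := stabR A (ε * A.ncard)

/-- A family of sets shatters `S` if every subset of `S` is cut out by a member of the family. -/
def Shatters {α : Type*} (F : Set (Set α)) (S : Set α) : Prop :=
  ∀ T ⊆ S, ∃ f ∈ F, S ∩ f = T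

/-- VC-dimension of a set system: the supremum of cardinalities of finite shattered sets. -/
noncomputable def vcDim {α : Type*} (F : Set (Set α)) : ℕ∞ :=
  ⨆ (S : Finset α) (_ : Shatters F ↑S), (S.card : ℕ∞)

/-- The family of left translates `{xA : x ∈ B}`. -/
def leftFam {G : Type*} [Group G] (A B : Set G) : Set (Set G) := (fun x => x • A) '' B

/-- The family of right translates `{Ax : x ∈ B}`. -/
def rightFam {G : Type*} [Group G] (A B : Set G) : Set (Set G) := (fun x => A * {x}) '' B

/-- `Z^ℓ_ε(A,X) = {g : min(|gX ∩ A|, |gX \ A|) ≥ ε|X|}`. -/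
def Zl {G : Type*} [Group G] (A X : Set G) (ε : ℝ) : Set G :=
  {g : G | ε * X.ncard ≤ min (((g • X) ∩ A).ncard : ℝ) (((g • X) \ A).ncard : ℝ)}

theorem vcDim_eq_zero_iff {α : Type*} (F : Set (Set α)) :
    vcDim F = 0 ↔ ∀ f ∈ F, ∀ g ∈ F, f = g := by
  unfold vcDim
  simp only [ENat.iSup_eq_zero, Nat.cast_eq_zero, Finset.card_eq_zero]
  constructor
  · intro h
    have key : ∀ f ∈ F, ∀ g ∈ F, f ⊆ g := by
      intro f hf g hg x hx
      by_contra hxg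
      have := h {x} (by
        intro T hT
        rw [Finset.coe_singleton] at hT ⊢
        rcases Set.subset_singleton_iff_eq.1 hT with rfl | rfl
        · exact ⟨g, hg, by simpa using hxg⟩
        · exact ⟨f, hf, by simpa using hx⟩)
      simp at this
    exact fun f hf g hg => (key f hf g hg).antisymm (key g hg f hf)
  · intro h S hS
    obtain ⟨f, hf, hfe⟩ := hS ∅ (by simp)
    obtain ⟨g, hg, hge⟩ := hS S subset_rfl
    rw [h f hf g hg, hge] at hfe
    exact_mod_cast hfe

theorem vc_self_eq_zero_tfae {G : Type*} [Group G] (A : Set G)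
    (hA : A.Finite) (hAne : A.Nonempty) :
    List.TFAE
      [vcDim (leftFam A A) = 0,
       vcDim (rightFam A A) = 0,
       (A * A).ncard = A.ncard,
       ∃ (H : Subgroup G) (a : G),
         A = a • (H : Set G) ∧ a • (H : Set G) = (H : Set G) * {a}] := by
  have hL : vcDim (leftFam A A) = 0 ↔ ∀ x ∈ A, ∀ y ∈ A, x • A = y • A := by
    rw [vcDim_eq_zero_iff]; simp [leftFam]
  have hR : vcDim (rightFam A A) = 0 ↔ ∀ x ∈ A, ∀ y ∈ A, A * {x} = A * {y} := by
    rw [vcDim_eq_zero_iff]; simp only [rightFam, Set.forall_mem_image]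
  have cL : ∀ x : G, (x • A).ncard = A.ncard := fun x =>
    Set.ncard_image_of_injective A (mul_right_injective x)
  have cR : ∀ x : G, (A * {x}).ncard = A.ncard := fun x => by
    rw [Set.mul_singleton]
    exact Set.ncard_image_of_injective A (mul_left_injective x)
  have fAA : (A * A).Finite := hA.mul hA
  have eL : (A * A).ncard = A.ncard → ∀ x ∈ A, x • A = A * A := fun h x hx =>
    Set.eq_of_subset_of_ncard_le (Set.smul_set_subset_smul hx) (by rw [cL, h]) fAA
  have eR : (A * A).ncard = A.ncard → ∀ x ∈ A, A * {x} = A * A := fun h x hx =>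
    Set.eq_of_subset_of_ncard_le
      (Set.mul_subset_mul_left (Set.singleton_subset_iff.2 hx)) (by rw [cR, h]) fAA
  obtain ⟨a, ha⟩ := hAne
  tfae_have 1 → 3 := by
    intro h
    rw [hL] at h
    rw [← cL a]
    congr 1
    ext z
    constructor
    · rintro ⟨x, hx, y, hy, rfl⟩
      rw [h a ha x hx]
      exact ⟨y, hy, rfl⟩
    · rintro ⟨y, hy, rfl⟩
      exact ⟨a, ha, y, hy, rfl⟩
  tfae_have 2 → 3 := by
    intro h
    rw [hR] at h
    rw [← cR a]
    congr 1
    ext z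
    constructor
    · rintro ⟨x, hx, y, hy, rfl⟩
      rw [h a ha y hy]
      exact ⟨x, hx, y, rfl, rfl⟩
    · rintro ⟨x, hx, y, rfl, rfl⟩
      exact ⟨x, hx, y, ha, rfl⟩
  tfae_have 3 → 2 := by
    intro h
    rw [hR]
    intro x hx y hy
    rw [eR h x hx, eR h y hy]
  tfae_have 3 → 4 := by
    intro h
    have hst : ∀ x ∈ A, a⁻¹ * x ∈ MulAction.stabilizer G A := by
      intro x hx
      rw [MulAction.mem_stabilizer_iff, mul_smul, eL h x hx, ← eL h a ha, inv_smul_smul]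
    have hc : a • A = A * {a} := by rw [eL h a ha, eR h a ha]
    have hm : ∀ g ∈ MulAction.stabilizer G A, g * a ∈ A := by
      intro g hg
      rw [MulAction.mem_stabilizer_iff] at hg
      rw [← hg]
      exact ⟨a, ha, rfl⟩
    have h1 : A = a • (MulAction.stabilizer G A : Set G) := by
      apply Set.Subset.antisymm
      · intro x hx
        exact ⟨a⁻¹ * x, hst x hx, by simp⟩
      · rintro _ ⟨g, hg, rfl⟩
        have : a * (g * a) ∈ a • A := ⟨_, hm g hg, rfl⟩
        rw [hc] at this
        obtain ⟨y, hy, z, rfl, hz⟩ := this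
        have : z * g = y := by
          simp only [← mul_assoc] at hz
          exact (mul_right_cancel hz).symm
        simpa [this] using hy
    have h2 : A = (MulAction.stabilizer G A : Set G) * {a} := by
      apply Set.Subset.antisymm
      · intro x hx
        have : a * x ∈ a • A := ⟨_, hx, rfl⟩
        rw [hc] at this
        obtain ⟨y, hy, z, rfl, hz⟩ := this
        refine ⟨z⁻¹ * y, hst y hy, z, rfl, ?_⟩
        simp only at hz ⊢
        rw [mul_assoc, hz, inv_mul_cancel_left]
      · rintro _ ⟨g, hg, z, rfl, rfl⟩
        exact hm g hg
    exact ⟨_, a, h1, h1.symm.trans h2⟩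
  tfae_have 4 → 1 := by
    rintro ⟨H, b, h1, h2⟩
    rw [hL]
    have : ∀ x ∈ A, x • A = b • A := by
      intro x hx
      rw [h1] at hx
      obtain ⟨g, hg, rfl⟩ := hx
      have : g • A = A := by
        rw [h1, h2, ← smul_mul_assoc, smul_coe_set hg]
      simp only [smul_eq_mul, mul_smul, this]
    intro x hx y hy
    rw [this x hx, this y hy]
  tfae_finish
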